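/- (Ma) Let G be a finite abelian group of order v and let S be a (v,k,λ,μ) partial difference set in G with 0 < k < v−1. If Δ := (λ−μ)² + 4(k−μ) = s² for a natural number s (i.e., S is Type II), then s divides v. -/

import Mathlib

/-!
For a character `χ` of `G` put `χ(S) = ∑_{h ∈ S} χ(h)`. Counting the products `x * y⁻¹` over `S × S`
gives `χ(S)² = (l - m) χ(S) + (k - m)` for every nontrivial `χ` (`charSum_sq`), so that `χ(S)` is
`r` or `r + s`, where `r = (l - m - s) / 2`.

Since `0 < k < v - 1` there are `x ∈ S` and `y ∉ S` with `y ≠ 1`. By orthogonality of characters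
(`sum_char_mul_sub`),
`v = ∑_χ χ(S) (χ(x⁻¹) - χ(y⁻¹)) = ∑_χ (χ(S) - r) (χ(x⁻¹) - χ(y⁻¹))`.
The trivial character contributes `0`, and every other summand is `0` or `s (χ(x⁻¹) - χ(y⁻¹))`, so
`v = s a` with `a` an algebraic integer. For `s ≠ 0` the number `a = v / s` is rational, hence an
integer.
-/

attribute [local instance] Classical.propDecidable

/-- `S` is a `(v,k,l,m)` partial difference set in the group `G`:
`G` has order `v`, `|S| = k`, `1 ∉ S`, `S = S⁻¹`, and every nonidentity `g ∈ G` has exactly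
`l` (resp. `m`) representations `g = x * y⁻¹` with `x, y ∈ S` when `g ∈ S` (resp. `g ∉ S`). -/
def IsPDS {G : Type*} [Group G] (v k l m : ℕ) (S : Set G) : Prop :=
  Nat.card G = v ∧ Nat.card S = k ∧ (1 : G) ∉ S ∧ (∀ s ∈ S, s⁻¹ ∈ S) ∧
  ∀ g : G, g ≠ 1 →
    Nat.card {p : ↥S × ↥S // (p.1 : G) * (p.2 : G)⁻¹ = g} = if g ∈ S then l else m

/-- `∑_{h ∈ S} χ(h)`, the value of a character on the element of the group ring attached to `S`.
The characters of the multiplicative group `G` are the additive characters of `Additive G`. -/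
noncomputable def charSum {G : Type*} [CommGroup G] [Fintype G] (S : Set G)
    (χ : AddChar (Additive G) ℂ) : ℂ :=
  ∑ h : S, χ (Additive.ofMul (h : G))

theorem isIntegral_char {G : Type*} [CommGroup G] [Fintype G]
    (χ : AddChar (Additive G) ℂ) (g : Additive G) : IsIntegral ℤ (χ g) := by
  apply IsIntegral.of_pow (n := Fintype.card (Additive G)) Fintype.card_pos
  rw [← AddChar.map_nsmul_eq_pow, card_nsmul_eq_zero, AddChar.map_zero_eq_one]
  exact isIntegral_one

/-- An integer that is a multiple of another one in the ring of algebraic integers is already a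
multiple of it in `ℤ`. -/
theorem dvd_of_isIntegral {s v : ℕ} {a : ℂ} (ha : IsIntegral ℤ a) (h : (v : ℂ) = s * a) :
    s ∣ v := by
  rcases Nat.eq_zero_or_pos s with rfl | hs
  · have : v = 0 := by exact_mod_cast (by simpa using h : (v : ℂ) = 0)
    simp [this]
  · have hs' : (s : ℂ) ≠ 0 := by exact_mod_cast hs.ne'
    have hq : a = algebraMap ℚ ℂ ((v : ℚ) / s) := by
      simp only [map_div₀, map_natCast]
      field_simp
      rw [h, mul_comm]
    rw [hq, isIntegral_algebraMap_iff (algebraMap ℚ ℂ).injective,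
      IsIntegrallyClosed.isIntegral_iff] at ha
    obtain ⟨z, hz⟩ := ha
    have hsq : (s : ℚ) ≠ 0 := by exact_mod_cast hs.ne'
    have : (v : ℤ) = s * z := by
      have hz' : (z : ℚ) = (v : ℚ) / s := by simpa using hz
      have : (v : ℚ) = s * z := by rw [hz']; field_simp
      exact_mod_cast this
    exact Int.natCast_dvd_natCast.mp ⟨z, this⟩

/-- The image of the partial difference set equation under a nontrivial character. -/
theorem charSum_sq {G : Type*} [CommGroup G] [Fintype G] {v k l m : ℕ} {S : Set G}
    (hS : IsPDS v k l m S) (χ : AddChar (Additive G) ℂ) (hχ : χ ≠ 1) :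
    charSum S χ ^ 2 = ((l : ℂ) - m) * charSum S χ + (k - m) := by
  obtain ⟨-, hk, h1, hinv, hcount⟩ := hS
  have hsymm : charSum S χ = ∑ h : S, χ (Additive.ofMul (h : G)⁻¹) := by
    let e : S ≃ S :=
      { toFun := fun h => ⟨(h : G)⁻¹, hinv _ h.2⟩
        invFun := fun h => ⟨(h : G)⁻¹, hinv _ h.2⟩
        left_inv := fun h => by simp
        right_inv := fun h => by simp }
    exact (Equiv.sum_comp e (fun h : S => χ (Additive.ofMul (h : G)))).symm
  have hind : charSum S χ = ∑ g : G, if g ∈ S then χ (Additive.ofMul g) else 0 := by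
    rw [← Finset.sum_filter]
    exact (Finset.sum_subtype _ (by simp) (fun g : G => χ (Additive.ofMul g))).symm
  have hcoef : ∀ g : G,
      (Fintype.card {p : ↥S × ↥S // (p.1 : G) * (p.2 : G)⁻¹ = g} : ℂ)
        = m + (if g ∈ S then (l : ℂ) - m else 0) + (if g = 1 then (k : ℂ) - m else 0) := by
    intro g
    by_cases hg : g = 1
    · subst hg
      -- The representations of `1` are the diagonal pairs.
      have : Fintype.card {p : ↥S × ↥S // (p.1 : G) * (p.2 : G)⁻¹ = 1} = k := by
        rw [← hk, ← Nat.card_eq_fintype_card]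
        refine Nat.card_congr
          { toFun := fun p => p.1.1
            invFun := fun h => ⟨(h, h), by simp⟩
            left_inv := ?_
            right_inv := fun h => rfl }
        rintro ⟨⟨a, b⟩, hab⟩
        have : a = b := Subtype.ext (mul_inv_eq_one.mp hab)
        subst this
        rfl
      simp [this, h1]
    · have := hcount g hg
      rw [Nat.card_eq_fintype_card] at this
      rw [this]
      by_cases hgS : g ∈ S <;> simp [hgS, hg]
  have hsum0 : ∑ g : G, χ (Additive.ofMul g) = 0 := by
    have := AddChar.sum_eq_zero_of_ne_one hχ
    rw [← this]
    exact Equiv.sum_comp Additive.ofMul (fun g => χ g)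
  have hfib : charSum S χ ^ 2 = ∑ g : G,
      (Fintype.card {p : ↥S × ↥S // (p.1 : G) * (p.2 : G)⁻¹ = g} : ℂ) * χ (Additive.ofMul g) := by
    rw [pow_two]
    nth_rewrite 2 [hsymm]
    rw [charSum, Finset.sum_mul_sum, ← Finset.sum_product', Finset.univ_product_univ,
      ← Finset.sum_fiberwise (s := Finset.univ) (g := fun p : S × S => (p.1 : G) * (p.2 : G)⁻¹)]
    refine Finset.sum_congr rfl fun g _ => ?_
    rw [Fintype.card_subtype, ← nsmul_eq_mul]
    refine Finset.sum_eq_card_nsmul fun p hp => ?_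
    rw [← (Finset.mem_filter.mp hp).2, ofMul_mul, AddChar.map_add_eq_mul]
  rw [hfib, hind]
  simp only [hcoef, add_mul, Finset.sum_add_distrib, ← Finset.mul_sum, hsum0, ite_mul, zero_mul]
  simp [Finset.mul_sum]

/-- Fourier inversion for the indicator function of `S`, as a difference of values at `x ∈ S` and
`y ∉ S`. The constant `r` disappears because `∑_χ χ(g) = 0` for `g ≠ 1`. -/
theorem sum_char_mul_sub {G : Type*} [CommGroup G] [Fintype G] {S : Set G} {x y : G}
    (hx : x ∈ S) (hy : y ∉ S) (hx1 : x ≠ 1) (hy1 : y ≠ 1) (r : ℂ) :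
    ∑ χ : AddChar (Additive G) ℂ, (charSum S χ - r) *
      (χ (Additive.ofMul x⁻¹) - χ (Additive.ofMul y⁻¹)) = Fintype.card G := by
  have horth : ∀ g : G, ∑ χ : AddChar (Additive G) ℂ, χ (Additive.ofMul g)
      = if g = 1 then (Fintype.card G : ℂ) else 0 := by
    intro g
    have := AddChar.sum_apply_eq_ite (Additive.ofMul g)
    simpa using this
  have hinv : ∀ z : G, ∑ χ : AddChar (Additive G) ℂ, charSum S χ * χ (Additive.ofMul z⁻¹)
      = if z ∈ S then (Fintype.card G : ℂ) else 0 := by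
    intro z
    simp only [charSum, Finset.sum_mul, ← AddChar.map_add_eq_mul, ← ofMul_mul]
    rw [Finset.sum_comm]
    simp only [horth, mul_inv_eq_one]
    split_ifs with hz
    · rw [Finset.sum_eq_single (⟨z, hz⟩ : S)]
      · simp
      · intro b _ hb
        rw [if_neg]
        exact fun h => hb (Subtype.ext h)
      · simp
    · refine Finset.sum_eq_zero fun h _ => if_neg ?_
      rintro rfl
      exact hz h.2
  simp only [sub_mul, mul_sub, Finset.sum_sub_distrib, hinv, ← Finset.mul_sum, horth]
  simp [hx, hy, hx1, hy1]

/-- Ma: if `S` is a Type II `(v,k,l,m)` PDS in a finite abelian group of order `v` with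
`0 < k < v−1` and `Δ = (l−m)² + 4(k−m) = s²`, then `s` divides `v`. -/
theorem stmt_6 {G : Type*} [CommGroup G] [Finite G] (v k l m : ℕ) (S : Set G)
    (hS : IsPDS v k l m S) (hk : 0 < k) (hkv : k < v - 1)
    (s : ℕ) (hΔ : ((l : ℤ) - (m : ℤ)) ^ 2 + 4 * ((k : ℤ) - (m : ℤ)) = (s : ℤ) ^ 2) :
    s ∣ v := by
  have := Fintype.ofFinite G
  obtain ⟨hv, hkS, h1, -, -⟩ := id hS
  obtain ⟨x, hx⟩ : S.Nonempty := by
    rw [← hkS, Nat.card_pos_iff] at hk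
    exact Set.nonempty_coe_sort.mp hk.1
  obtain ⟨y, hy⟩ : ∃ y, y ∉ insert 1 S := by
    by_contra! h
    have huniv : insert 1 S = Set.univ := Set.eq_univ_of_forall h
    have hle := Set.ncard_insert_le 1 S
    rw [huniv, Set.ncard_univ, hv, ← Nat.card_coe_set_eq, hkS] at hle
    omega
  rw [Set.mem_insert_iff, not_or] at hy
  have hx1 : x ≠ 1 := fun h => h1 (h ▸ hx)
  have hΔ' : ((l : ℂ) - m) ^ 2 + 4 * ((k : ℂ) - m) = (s : ℂ) ^ 2 := by exact_mod_cast hΔ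
  have hterm : ∀ χ : AddChar (Additive G) ℂ, ∃ a : ℂ, IsIntegral ℤ a ∧
      (charSum S χ - ((l : ℂ) - m - s) / 2) *
        (χ (Additive.ofMul x⁻¹) - χ (Additive.ofMul y⁻¹)) = s * a := by
    intro χ
    by_cases hχ : χ = 1
    · exact ⟨0, isIntegral_zero, by simp [hχ]⟩
    · have hroots : (charSum S χ - ((l : ℂ) - m - s) / 2) *
          (charSum S χ - ((l : ℂ) - m - s) / 2 - s) = 0 := by
        linear_combination charSum_sq hS χ hχ + hΔ' / 4
      rcases mul_eq_zero.mp hroots with h | h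
      · exact ⟨0, isIntegral_zero, by rw [h]; ring⟩
      · exact ⟨_, (isIntegral_char χ _).sub (isIntegral_char χ _), by rw [sub_eq_zero.mp h]⟩
  choose a ha hsa using hterm
  refine dvd_of_isIntegral (IsIntegral.sum (s := Finset.univ) a fun χ _ => ha χ) ?_
  rw [Finset.mul_sum, ← Finset.sum_congr rfl fun χ _ => hsa χ,
    sum_char_mul_sub hx hy.2 hx1 hy.1, ← hv, Nat.card_eq_fintype_card]
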